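/- If G is a connected chordal graph with a minimal tree representation T, then either G is a complete graph or lpt(G) ≤ mf(T), where for a tree T on at least 2 vertices, mf(T) is the maximum over all edges e ∈ E(T) of the minimum number of leaves of T contained in a component of T − e. -/

import Mathlib

open SimpleGraph

/-- A graph is chordal if every cycle on at least 4 vertices has a chord
(an edge of the graph joining two vertices of the cycle that is not an edge of the cycle). -/
def IsChordal {V : Type} (G : SimpleGraph V) : Prop :=
  ∀ (v : V) (c : G.Walk v v), c.IsCycle → 4 ≤ c.length →
    ∃ a b : V, a ∈ c.support ∧ b ∈ c.support ∧ G.Adj a b ∧ s(a, b) ∉ c.edges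

/-- A tree representation of `G` with host tree `T`: each vertex `u` of `G` gets a
nonempty subtree `S u` of `T`, and distinct vertices are adjacent iff their subtrees meet. -/
structure TreeRep {V W : Type} (G : SimpleGraph V) (T : SimpleGraph W) : Type where
  isTree : T.IsTree
  S : V → Set W
  subtree_connected : ∀ u : V, (T.induce (S u)).Connected
  adj_iff : ∀ u v : V, u ≠ v → (G.Adj u v ↔ (S u ∩ S v).Nonempty)

/-- A tree representation is minimal if no tree representation of `G` has a host tree
with fewer vertices. -/
def TreeRep.IsMinimal {V W : Type} [Fintype W] {G : SimpleGraph V} {T : SimpleGraph W}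
    (_R : TreeRep G T) : Prop :=
  ∀ (W' : Type) [Fintype W'] (T' : SimpleGraph W'),
    Nonempty (TreeRep G T') → Fintype.card W ≤ Fintype.card W'

/-- The bag of a host tree vertex `x`. -/
def TreeRep.bag {V W : Type} {G : SimpleGraph V} {T : SimpleGraph W}
    (R : TreeRep G T) (x : W) : Set V :=
  {u : V | x ∈ R.S u}

/-- In `T` rooted at `r`, the (vertex set of the) subtree rooted at `x`: all vertices `w`
such that the `r`–`w` path contains `x`. -/
def rootedSubtree {W : Type} (T : SimpleGraph W) (r x : W) : Set W :=
  {w : W | ∀ p : T.Walk r w, p.IsPath → x ∈ p.support}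

/-- The core of a subgraph `H` of `G`: the union over edges `uv` of `H` of `V(S u ∩ S v)`,
a set of host-tree vertices. -/
def TreeRep.core {V W : Type} {G : SimpleGraph V} {T : SimpleGraph W}
    (R : TreeRep G T) (H : G.Subgraph) : Set W :=
  {t : W | ∃ u v : V, H.Adj u v ∧ t ∈ R.S u ∧ t ∈ R.S v}

/-- `C` is a connected component of the subgraph of `T` induced on the vertex set `s`. -/
def IsCompOf {W : Type} (T : SimpleGraph W) (s C : Set W) : Prop :=
  C.Nonempty ∧ C ⊆ s ∧ (T.induce C).Connected ∧
    ∀ ⦃a b : W⦄, a ∈ C → b ∈ s → T.Adj a b → b ∈ C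

/-- A graph is 2-connected if it has more than 2 vertices and deleting any one vertex
leaves it connected. -/
def TwoConnected {V : Type} (G : SimpleGraph V) : Prop :=
  2 < Nat.card V ∧ ∀ v : V, (G.induce {v}ᶜ).Connected

/-- `G` is `k`-connected: more than `k` vertices, and deleting fewer than `k` vertices
leaves it connected. -/
def IsKConnectedGraph {V : Type} (G : SimpleGraph V) (k : ℕ) : Prop :=
  k < Nat.card V ∧ ∀ s : Set V, s.Finite → s.ncard < k → (G.induce sᶜ).Connected

/-- The vertex connectivity `κ(G)`: the maximum `k` such that `G` is `k`-connected. -/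
noncomputable def vertexConnectivity {V : Type} (G : SimpleGraph V) : ℕ :=
  sSup {k : ℕ | IsKConnectedGraph G k}

/-- `p` is a path of maximum length in `G`. -/
def IsLongestPath {V : Type} (G : SimpleGraph V) {a b : V} (p : G.Walk a b) : Prop :=
  p.IsPath ∧ ∀ (c d : V) (q : G.Walk c d), q.IsPath → q.length ≤ p.length

/-- `c` is a cycle of maximum length in `G`. -/
def IsLongestCycle {V : Type} (G : SimpleGraph V) {a : V} (c : G.Walk a a) : Prop :=
  c.IsCycle ∧ ∀ (d : V) (q : G.Walk d d), q.IsCycle → q.length ≤ c.length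

/-- The longest path transversal number of `G`: the least size of a set of vertices
meeting every longest path. -/
noncomputable def lpt {V : Type} (G : SimpleGraph V) : ℕ :=
  sInf {k : ℕ | ∃ A : Set V, A.Finite ∧ A.ncard = k ∧
    ∀ (a b : V) (p : G.Walk a b), IsLongestPath G p → ∃ v ∈ A, v ∈ p.support}

/-- The longest cycle transversal number of `G`: the least size of a set of vertices
meeting every longest cycle. -/
noncomputable def lct {V : Type} (G : SimpleGraph V) : ℕ :=
  sInf {k : ℕ | ∃ A : Set V, A.Finite ∧ A.ncard = k ∧
    ∀ (a : V) (c : G.Walk a a), IsLongestCycle G c → ∃ v ∈ A, v ∈ c.support}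

/-- `DQX T q X Q0`: the union, over `y ∈ Q0`, of the component of `X − E(Q)` containing
`y` (all vertices joined to some `y ∈ Q0` by a walk inside `X` avoiding the edges of `q`). -/
def DQX {W : Type} (T : SimpleGraph W) {x z : W} (q : T.Walk x z) (X : Set W)
    (Q0 : Set W) : Set W :=
  {w : W | ∃ y ∈ Q0, ∃ d : (T.deleteEdges {e : Sym2 W | e ∈ q.edges}).Walk y w,
    ∀ a ∈ d.support, a ∈ X}

/-- Cutter can force the Cutter–Chooser game from position `(X, x)` (a subtree `X` of the
host tree, rooted at `x`) to end within `t` rounds: Cutter picks `z ∈ X` and cuts along the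
`x`–`z` path `Q` in `X`; either `X = Q` (game over), or for every component `X'` of
`X − V(Q)` (with its root `x'`, the vertex of `X'` adjacent to `Q`) that Chooser may pick,
Cutter wins within `t - 1` further rounds. -/
def cutterWins {W : Type} (T : SimpleGraph W) : ℕ → Set W → W → Prop
  | 0, _, _ => False
  | t + 1, X, x =>
      ∃ z ∈ X, ∃ p : T.Walk x z, p.IsPath ∧ (∀ w ∈ p.support, w ∈ X) ∧
        (X = {w : W | w ∈ p.support} ∨
          ∀ (X' : Set W) (x' : W), IsCompOf T (X \ {w : W | w ∈ p.support}) X' →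
            x' ∈ X' → (∃ u ∈ p.support, T.Adj u x') → cutterWins T t X' x')

/-- `ccg(X, x)`: the number of rounds of the Cutter–Chooser game on the subtree `X` of the
host tree rooted at `x`, under optimal play. -/
noncomputable def ccgOn {W : Type} (T : SimpleGraph W) (X : Set W) (x : W) : ℕ :=
  sInf {t : ℕ | cutterWins T t X x}

/-- `ccg(T)`: the minimum over roots `r` of `ccg(T, r)`. -/
noncomputable def ccg {W : Type} (T : SimpleGraph W) : ℕ :=
  sInf (Set.range fun r : W => ccgOn T Set.univ r)

/-- A subdivided caterpillar: a tree having a (spine) path containing every vertex of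
degree at least 3. -/
def IsSubdividedCaterpillar {W : Type} (T : SimpleGraph W) : Prop :=
  T.IsTree ∧ ∃ (a b : W) (q : T.Walk a b), q.IsPath ∧
    ∀ v : W, 3 ≤ (T.neighborSet v).ncard → v ∈ q.support

/-- A subdivided star: a tree with at most one vertex of degree at least 3. -/
def IsSubdividedStar {W : Type} (T : SimpleGraph W) : Prop :=
  T.IsTree ∧ ∀ v w : W, 3 ≤ (T.neighborSet v).ncard → 3 ≤ (T.neighborSet w).ncard → v = w

/-- A leaf: a vertex of degree 1. -/
def IsLeaf {W : Type} (T : SimpleGraph W) (v : W) : Prop := (T.neighborSet v).ncard = 1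

/-- `mf T`: the maximum over edges `e` of `T` of the minimum number of leaves of `T`
contained in a component of `T − e`. -/
noncomputable def mf {W : Type} (T : SimpleGraph W) : ℕ :=
  sSup {k : ℕ | ∃ u v : W, T.Adj u v ∧
    k = min {w : W | IsLeaf T w ∧ (T.deleteEdges {s(u, v)}).Reachable u w}.ncard
            {w : W | IsLeaf T w ∧ (T.deleteEdges {s(u, v)}).Reachable v w}.ncard}

/-- In `T` rooted at `r`, `v` is a child of `u`. -/
def IsChildIn {W : Type} (T : SimpleGraph W) (r u v : W) : Prop :=
  T.Adj u v ∧ ∀ p : T.Walk r v, p.IsPath → u ∈ p.support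

/-- In `T` rooted at `r`, `u` is childless. -/
def IsChildlessIn {W : Type} (T : SimpleGraph W) (r u : W) : Prop :=
  ¬ ∃ v : W, IsChildIn T r u v

/-!
Every vertex `t` of the host tree points at a neighbour `y`. If some longest path avoids the bag
of `t`, then the subtrees of its vertices all lie in one component of `T - t`, and `t` points
into it. Otherwise take a longest path whose initial segment before its first vertex in the bag
of `t` is as long as possible, and let `t` point to the component of `T - t` that contains the
subtrees of this segment. For each leaf of `T` in that component choose a vertex of the bag of `t`
whose subtree reaches furthest towards the leaf. A longest path avoiding all chosen vertices
could not enter the component, so its part from the bag of `t` onwards could be joined, through a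
chosen vertex, to the maximal initial segment, producing a path that is too long. Hence the chosen
vertices form a longest path transversal.

A finite tree has fewer edges than vertices, so some two adjacent vertices `t` and `y` point at
each other. Two longest paths of a connected graph meet, which rules out that `t` and `y` are
separated by longest paths on both sides, and the mixed case is impossible because the
transversal chosen at one end consists of vertices in the bag of the other. So both sides of
`ty` carry a transversal bounded by their number of leaves.
-/

section Lists

variable {α : Type*}

lemma exists_eq_append_cons_of_exists_mem {p : α → Prop} {l : List α} (h : ∃ x ∈ l, p x) :
    ∃ X b Z, l = X ++ b :: Z ∧ p b ∧ ∀ x ∈ X, ¬ p x := by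
  classical
  obtain ⟨b, hb⟩ := Option.isSome_iff_exists.1
    (List.find?_isSome.2 (by simpa using h) : (l.find? (decide <| p ·)).isSome)
  obtain ⟨hpb, X, Z, rfl, hX⟩ := List.find?_eq_some_iff_append.1 hb
  exact ⟨X, b, Z, rfl, by simpa using hpb, by simpa using hX⟩

/-- `x` and `y` occupy neighbouring positions of `l`, in either order. -/
def AreConsecutive (l : List α) (x y : α) : Prop :=
  [x, y] <:+: l ∨ [y, x] <:+: l

lemma exists_areConsecutive {p : α → Prop} {l : List α} {a b : α} (ha : a ∈ l) (hb : b ∈ l)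
    (hpa : p a) (hpb : ¬ p b) : ∃ x y, AreConsecutive l x y ∧ p x ∧ ¬ p y := by
  by_contra! hno
  have hchain : l.IsChain fun x y => p x ↔ p y := by
    refine List.isChain_iff_forall_rel_of_append_cons_cons.2 fun x y l₁ l₂ hl => ?_
    have hxy : [x, y] <:+: l := ⟨l₁, l₂, by simp [hl]⟩
    exact ⟨hno x y (.inl hxy), hno y x (.inr hxy)⟩
  have : Trans (fun x y => p x ↔ p y) (fun x y => p x ↔ p y) (fun x y => p x ↔ p y) :=
    ⟨Iff.trans⟩
  have hab : p a ↔ p b :=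
    List.Pairwise.forall_of_forall_of_flip (R := fun x y => p x ↔ p y) (fun _ _ => Iff.rfl)
      hchain.pairwise (hchain.pairwise.imp Iff.symm) ha hb
  exact hpb (hab.1 hpa)

namespace AreConsecutive

variable {l : List α} {x y : α}

lemma mem (h : AreConsecutive l x y) : x ∈ l ∧ y ∈ l := by
  rcases h with h | h <;> exact ⟨h.subset (by simp), h.subset (by simp)⟩

lemma adj {G : SimpleGraph α} (h : AreConsecutive l x y) (hl : l.IsChain G.Adj) :
    G.Adj x y := by
  rcases h with h | h
  · simpa using hl.infix h
  · simpa [G.adj_comm] using hl.infix h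

end AreConsecutive

end Lists

section Paths

variable {α : Type*} {G : SimpleGraph α} {P Q X Y : List α} {a b p v x y : α} {B : Set α}

/-- The vertex sequence of a path in `G`. Lists, unlike walks, can be cut and spliced without
carrying endpoints along. The empty list is allowed. -/
structure IsPathList (G : SimpleGraph α) (P : List α) : Prop where
  isChain : P.IsChain G.Adj
  nodup : P.Nodup

/-- The vertex sequence of a path of maximum length in `G`. -/
structure IsLongestPathList (G : SimpleGraph α) (P : List α) : Prop extends IsPathList G P where
  length_le : ∀ ⦃Q⦄, IsPathList G Q → Q.length ≤ P.length

/-- A set of vertices meeting every longest path of `G`. -/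
def IsLongestPathTransversal (G : SimpleGraph α) (A : Set α) : Prop :=
  ∀ ⦃P⦄, IsLongestPathList G P → ∃ v ∈ P, v ∈ A

/-- `X ++ b :: Z` is a longest path of `G` whose first vertex in `B` is `b`. The proof maximises
the length of the initial segment `X`. -/
structure IsLongestPathEntering (G : SimpleGraph α) (B : Set α) (X : List α) (b : α)
    (Z : List α) : Prop where
  isLongest : IsLongestPathList G (X ++ b :: Z)
  mem : b ∈ B
  notMem : ∀ x ∈ X, x ∉ B

namespace IsPathList

lemma reverse (h : IsPathList G P) : IsPathList G P.reverse :=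
  ⟨List.isChain_reverse.2 (h.isChain.imp fun _ _ => Adj.symm), List.nodup_reverse.2 h.nodup⟩

lemma of_isInfix (h : IsPathList G P) (hQ : Q <:+: P) : IsPathList G Q :=
  ⟨h.isChain.infix hQ, h.nodup.sublist hQ.sublist⟩

lemma glue (hX : IsPathList G (X ++ [p])) (hY : IsPathList G (p :: Y)) (hXY : X.Disjoint Y) :
    IsPathList G (X ++ p :: Y) where
  isChain := List.isChain_split.2 ⟨hX.isChain, hY.isChain⟩
  nodup := by
    refine List.nodup_append'.2 ⟨hX.nodup.of_append_left, hY.nodup, List.disjoint_cons_right.2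
      ⟨fun hp => ?_, hXY⟩⟩
    exact List.disjoint_of_nodup_append hX.nodup hp (List.mem_singleton_self p)

lemma cons (h : IsPathList G (b :: P)) (hv : v ∉ b :: P) (hvb : G.Adj v b) :
    IsPathList G (v :: b :: P) :=
  ⟨h.isChain.cons_cons hvb, h.nodup.cons hv⟩

lemma concat (h : IsPathList G (P ++ [a])) (hv : v ∉ P ++ [a]) (hav : G.Adj a v) :
    IsPathList G (P ++ [a] ++ [v]) := by
  have hrev : IsPathList G (a :: P.reverse) := by simpa using h.reverse
  simpa using (hrev.cons (by simpa [or_comm] using hv) hav.symm).reverse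

lemma exists_half (h : IsPathList G P) (hp : p ∈ P) :
    ∃ X, IsPathList G (X ++ [p]) ∧ X ⊆ P ∧ P.length ≤ 2 * X.length + 1 := by
  obtain ⟨A, B, rfl⟩ := List.append_of_mem hp
  rcases le_total B.length A.length with hBA | hAB
  · exact ⟨A, h.of_isInfix ⟨[], B, by simp⟩, by simp, by simp; omega⟩
  · have hB : IsPathList G (p :: B) := h.of_isInfix ⟨A, [], by simp⟩
    exact ⟨B.reverse, by simpa using hB.reverse, fun x hx => by simp_all, by simp; omega⟩

end IsPathList

lemma exists_isPathList_between (hG : G.Preconnected) (hP : P ≠ []) (hQ : Q ≠ [])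
    (hPQ : P.Disjoint Q) : ∃ p ∈ P, ∃ q ∈ Q, ∃ R, IsPathList G (p :: (R ++ [q])) ∧
      R.Disjoint P ∧ R.Disjoint Q := by
  obtain ⟨a, ha⟩ := List.exists_mem_of_ne_nil P hP
  obtain ⟨b, hb⟩ := List.exists_mem_of_ne_nil Q hQ
  obtain ⟨w, hw⟩ := (hG a b).exists_isPath
  have hpath : IsPathList G w.support := ⟨w.isChain_adj_support, hw.support_nodup⟩
  obtain ⟨L, q, Z, hwL, hq, hL⟩ :=
    exists_eq_append_cons_of_exists_mem (p := (· ∈ Q)) ⟨b, w.end_mem_support, hb⟩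
  have haL : a ∈ L := by
    rw [← w.cons_tail_support] at hwL
    rcases List.cons_eq_append_iff.1 hwL with ⟨-, hqa⟩ | ⟨L', rfl, -⟩
    · exact (hPQ ha ((List.cons.inj hqa).1 ▸ hq)).elim
    · exact List.mem_cons_self
  obtain ⟨R, p, L', hLR, hp, hR⟩ :=
    exists_eq_append_cons_of_exists_mem (p := (· ∈ P)) (l := L.reverse) ⟨a, by simpa using haL, ha⟩
  obtain rfl : L = L'.reverse ++ p :: R.reverse := by
    simpa using congrArg List.reverse hLR
  refine ⟨p, hp, q, hq, R.reverse, hpath.of_isInfix ⟨L'.reverse, Z, by simp [hwL]⟩, ?_, ?_⟩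
  · exact fun x hx => hR x (by simpa using hx)
  · exact fun x hx => hL x (by simp_all)

namespace IsLongestPathList

lemma ne_nil [Nonempty α] (h : IsLongestPathList G P) : P ≠ [] := by
  rintro rfl
  obtain ⟨v⟩ := ‹Nonempty α›
  simpa using h.length_le (Q := [v]) ⟨.singleton v, List.nodup_singleton v⟩

lemma mem_of_adj_head (h : IsLongestPathList G (b :: P)) (hvb : G.Adj v b) : v ∈ b :: P := by
  by_contra hv
  simpa using h.length_le (h.toIsPathList.cons hv hvb)

lemma mem_of_isInfix (h : IsLongestPathList G P) (hxy : [x, y] <:+: P) (hxv : G.Adj x v)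
    (hvy : G.Adj v y) : v ∈ P := by
  by_contra hv
  obtain ⟨X, Y, rfl⟩ := hxy
  have hX : IsPathList G (X ++ [x] ++ [v]) :=
    (h.of_isInfix ⟨[], y :: Y, by simp⟩ : IsPathList G (X ++ [x])).concat (by simp_all) hxv
  have hY : IsPathList G (v :: y :: Y) :=
    (h.of_isInfix ⟨X ++ [x], [], by simp⟩ : IsPathList G (y :: Y)).cons (by simp_all) hvy
  have hdisj : (X ++ [x]).Disjoint (y :: Y) :=
    List.disjoint_of_nodup_append (by simpa using h.nodup)
  simpa using h.length_le (hX.glue hY hdisj)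

lemma mem_of_areConsecutive (h : IsLongestPathList G P) (hxy : AreConsecutive P x y)
    (hvx : G.Adj v x) (hvy : G.Adj v y) : v ∈ P :=
  hxy.elim (h.mem_of_isInfix · hvx.symm hvy) (h.mem_of_isInfix · hvy.symm hvx)

lemma length_eq (hP : IsLongestPathList G P) (hQ : IsLongestPathList G Q) :
    P.length = Q.length :=
  (hQ.length_le hP.toIsPathList).antisymm (hP.length_le hQ.toIsPathList)

lemma not_disjoint (hG : G.Connected) (hP : IsLongestPathList G P)
    (hQ : IsLongestPathList G Q) : ¬ P.Disjoint Q := by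
  intro hPQ
  have := hG.nonempty
  obtain ⟨p, hp, q, hq, R, hR, hRP, hRQ⟩ :=
    exists_isPathList_between hG.preconnected hP.ne_nil hQ.ne_nil hPQ
  obtain ⟨X, hX, hXP, hXlen⟩ := hP.exists_half hp
  obtain ⟨Y, hY, hYQ, hYlen⟩ := hQ.exists_half hq
  have hqY : IsPathList G (q :: Y.reverse) := by simpa using hY.reverse
  have hXR : IsPathList G ((X ++ p :: R) ++ [q]) := by
    simpa using hX.glue hR fun x hx hxR => by
      rcases List.mem_append.1 hxR with hxR | hxq
      · exact hRP hxR (hXP hx)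
      · exact hPQ (hXP hx) (List.mem_singleton.1 hxq ▸ hq)
  have hlong := hP.length_le <| hXR.glue hqY fun x hx hxY => by
    have hxQ : x ∈ Q := hYQ (List.mem_reverse.1 hxY)
    rcases List.mem_append.1 hx with hx | hx
    · exact hPQ (hXP hx) hxQ
    · rcases List.mem_cons.1 hx with rfl | hx
      · exact hPQ hp hxQ
      · exact hRQ hx hxQ
  have hlen := hP.length_eq hQ
  simp only [List.length_append, List.length_cons, List.length_reverse] at hlong
  omega

end IsLongestPathList

lemma exists_isLongestPathEntering_forall_length_le (hP : IsLongestPathList G P)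
    (hB : IsLongestPathTransversal G B) :
    ∃ X b Z, IsLongestPathEntering G B X b Z ∧
      ∀ ⦃X' b' Z'⦄, IsLongestPathEntering G B X' b' Z' → X'.length ≤ X.length := by
  let lengths : Set ℕ := {n | ∃ X b Z, IsLongestPathEntering G B X b Z ∧ X.length = n}
  have hne : lengths.Nonempty := by
    obtain ⟨X, b, Z, rfl, hb, hX⟩ := exists_eq_append_cons_of_exists_mem (hB hP)
    exact ⟨_, X, b, Z, ⟨hP, hb, hX⟩, rfl⟩
  have hbdd : BddAbove lengths := by
    refine ⟨P.length, ?_⟩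
    rintro _ ⟨X, b, Z, h, rfl⟩
    simp [hP.length_eq h.isLongest]
  obtain ⟨_, ⟨X, b, Z, h, rfl⟩, hmax⟩ := hbdd.exists_isGreatest_of_nonempty hne
  exact ⟨X, b, Z, h, fun X' b' Z' h' => hmax ⟨X', b', Z', h', rfl⟩⟩

end Paths

lemma IsLongestPath.isLongestPathList {V : Type} {G : SimpleGraph V} {a b : V} {p : G.Walk a b}
    (h : IsLongestPath G p) : IsLongestPathList G p.support where
  isChain := p.isChain_adj_support
  nodup := h.1.support_nodup
  length_le Q hQ := by
    rcases eq_or_ne Q [] with rfl | hne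
    · simp
    have hpath : (Walk.ofSupport Q hne hQ.isChain).IsPath := by
      rw [Walk.isPath_def, Walk.support_ofSupport]
      exact hQ.nodup
    calc Q.length = (Walk.ofSupport Q hne hQ.isChain).length + 1 := by
          rw [← Walk.length_support, Walk.support_ofSupport]
      _ ≤ p.length + 1 := Nat.succ_le_succ (h.2 _ _ _ hpath)
      _ = p.support.length := p.length_support.symm

lemma lpt_le_ncard {V : Type} {G : SimpleGraph V} {A : Set V} (hA : A.Finite)
    (h : IsLongestPathTransversal G A) : lpt G ≤ A.ncard :=
  Nat.sInf_le ⟨A, hA, rfl, fun _ _ _ hp =>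
    let ⟨v, hvp, hvA⟩ := h hp.isLongestPathList; ⟨v, hvA, hvp⟩⟩

section EdgeSides

variable {α : Type*} {T : SimpleGraph α} {S : Set α} {a b s t w y : α}

lemma exists_isPath_support_subset (hS : (T.induce S).Preconnected) (ha : a ∈ S) (hb : b ∈ S) :
    ∃ p : T.Walk a b, p.IsPath ∧ ∀ x ∈ p.support, x ∈ S := by
  obtain ⟨p, hp⟩ := (hS ⟨a, ha⟩ ⟨b, hb⟩).exists_isPath
  refine ⟨p.map (Embedding.induce S).toHom, hp.map Subtype.val_injective, fun x hx => ?_⟩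
  obtain ⟨z, -, rfl⟩ := List.mem_map.1 (p.support_map _ ▸ hx)
  exact z.2

/-- The vertex set of the component of `T - ty` containing `y`. It is meant for an edge `ty`
whose deletion separates `t` from `y`, and then `t` does not belong to it. -/
def edgeSide (T : SimpleGraph α) (t y : α) : Set α :=
  {w | (T.deleteEdges {s(t, y)}).Reachable y w}

lemma self_mem_edgeSide : y ∈ edgeSide T t y :=
  Reachable.rfl

lemma edgeSide_swap : edgeSide T y t = {w | (T.deleteEdges {s(t, y)}).Reachable t w} := by
  rw [edgeSide, Sym2.eq_swap]

lemma notMem_edgeSide (h : T.IsBridge s(t, y)) : t ∉ edgeSide T t y :=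
  fun ht => isBridge_iff.1 h ht.symm

lemma disjoint_edgeSide_swap (h : T.IsBridge s(t, y)) :
    Disjoint (edgeSide T t y) (edgeSide T y t) := by
  rw [edgeSide_swap (t := t), Set.disjoint_left]
  exact fun w hy ht => isBridge_iff.1 h (ht.trans hy.symm)

lemma mem_edges_of_mem_edgeSide_of_notMem (ha : a ∈ edgeSide T t y) (hb : b ∉ edgeSide T t y)
    (p : T.Walk a b) : s(t, y) ∈ p.edges :=
  p.mem_edges_of_not_reachable_deleteEdges fun h => hb (ha.trans h)

lemma mem_edgeSide_of_notMem_support (ha : a ∈ edgeSide T t y) (p : T.Walk a b)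
    (ht : t ∉ p.support) : b ∈ edgeSide T t y := by
  by_contra hb
  exact ht (p.fst_mem_support_of_mem_edges (mem_edges_of_mem_edgeSide_of_notMem ha hb p))

lemma exists_adj_mem_edgeSide (hT : T.Preconnected) (hwt : w ≠ t) :
    ∃ y, T.Adj t y ∧ w ∈ edgeSide T t y := by
  obtain ⟨p, hp⟩ := (hT t w).exists_isPath
  cases p with
  | nil => exact absurd rfl hwt
  | cons hty p =>
    exact ⟨_, hty, mem_edgeSide_of_notMem_support self_mem_edgeSide p
      ((Walk.cons_isPath_iff _ _).1 hp).2⟩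

lemma subset_edgeSide (hS : (T.induce S).Preconnected) (ht : t ∉ S) (hs : s ∈ S)
    (hsy : s ∈ edgeSide T t y) : S ⊆ edgeSide T t y := by
  intro w hw
  obtain ⟨p, -, hpS⟩ := exists_isPath_support_subset hS hs hw
  exact mem_edgeSide_of_notMem_support hsy p fun htp => ht (hpS t htp)

lemma mem_of_mem_edgeSide (h : T.IsBridge s(t, y)) (hS : (T.induce S).Preconnected)
    (ht : t ∈ S) (hs : s ∈ S) (hsy : s ∈ edgeSide T t y) : y ∈ S := by
  obtain ⟨p, -, hpS⟩ := exists_isPath_support_subset hS hs ht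
  exact hpS y (p.snd_mem_support_of_mem_edges
    (mem_edges_of_mem_edgeSide_of_notMem hsy (notMem_edgeSide h) p))

end EdgeSides

section Trees

variable {α : Type*} {T : SimpleGraph α}

lemma support_subset_of_induce_preconnected (hT : T.IsAcyclic) {S : Set α}
    (hS : (T.induce S).Preconnected) {a b : α} (ha : a ∈ S) (hb : b ∈ S) {p : T.Walk a b}
    (hp : p.IsPath) : ∀ x ∈ p.support, x ∈ S := by
  obtain ⟨q, hq, hqS⟩ := exists_isPath_support_subset hS ha hb
  obtain rfl : p = q := congrArg Subtype.val ((hT.subsingleton_path a b).elim ⟨p, hp⟩ ⟨q, hq⟩)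
  exact hqS

-- Subtrees containing the end `t` of a path meet the path in nested final segments.
lemma exists_forall_inter_support_subset {ι : Type*} (hT : T.IsAcyclic) {S : ι → Set α}
    (hS : ∀ i, (T.induce (S i)).Preconnected) {F : Set ι} (hF : F.Nonempty) {l t : α}
    (ht : ∀ i ∈ F, t ∈ S i) {p : T.Walk l t} (hp : p.IsPath) :
    ∃ j ∈ F, ∀ i ∈ F, ∀ s ∈ p.support, s ∈ S i → s ∈ S j := by
  induction p with
  | nil =>
    obtain ⟨j, hj⟩ := hF
    refine ⟨j, hj, fun _ _ s hs _ => ?_⟩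
    rw [Walk.support_nil, List.mem_singleton] at hs
    exact hs ▸ ht j hj
  | @cons a _ _ h p ih =>
    by_cases hstart : ∃ j ∈ F, a ∈ S j
    · obtain ⟨j, hj, haj⟩ := hstart
      exact ⟨j, hj, fun _ _ s hs _ =>
        support_subset_of_induce_preconnected hT (hS j) haj (ht j hj) hp s hs⟩
    · push Not at hstart
      obtain ⟨j, hj, hmax⟩ := ih ht hp.of_cons
      refine ⟨j, hj, fun i hi s hs hsi => ?_⟩
      rcases List.mem_cons.1 hs with rfl | hs
      · exact absurd hsi (hstart i hi)
      · exact hmax i hi s hs hsi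

lemma exists_apply_apply_eq_of_forall_adj [Finite α] (hT : T.IsTree) {f : α → α}
    (hf : ∀ w, T.Adj w (f w)) : ∃ w, f (f w) = w := by
  classical
  have := Fintype.ofFinite α
  have hcard : T.edgeFinset.card < (Finset.univ : Finset α).card := by
    rw [Finset.card_univ, ← hT.card_edgeFinset]
    exact Nat.lt_succ_self _
  obtain ⟨a, -, b, -, hab, he⟩ := Finset.exists_ne_map_eq_of_card_lt_of_maps_to hcard
    (f := fun w => s(w, f w)) fun w _ => by simpa using hf w
  obtain ⟨h, -⟩ | ⟨hafb, hfab⟩ := Sym2.eq_iff.1 he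
  · exact absurd h hab
  · exact ⟨a, by rw [hfab, ← hafb]⟩

end Trees

section Leaves

variable {W : Type} {T : SimpleGraph W} {s t y l : W}

/-- The leaves of `T` in the component of `T - ty` containing `y`. -/
def sideLeaves (T : SimpleGraph W) (t y : W) : Set W :=
  {w | IsLeaf T w ∧ w ∈ edgeSide T t y}

lemma isLeaf_of_forall_adj_mem_support (hT : T.IsAcyclic) {p : T.Walk l t} (hp : p.IsPath)
    (hnil : ¬ p.Nil) (hmax : ∀ z, T.Adj l z → z ∈ p.support) : IsLeaf T l := by
  have hnbr : T.neighborSet l = {p.snd} := by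
    ext z
    rw [mem_neighborSet, Set.mem_singleton_iff]
    refine ⟨fun hz => hT.eq_snd_of_adj_start hp hz (hmax z hz), ?_⟩
    rintro rfl
    exact p.adj_snd hnil
  rw [IsLeaf, hnbr, Set.ncard_singleton]

lemma exists_isPath_forall_adj_mem_support [Finite W] (hst : T.Reachable s t) :
    ∃ (l : W) (p : T.Walk l t), p.IsPath ∧ s ∈ p.support ∧ ∀ z, T.Adj l z → z ∈ p.support := by
  have := Fintype.ofFinite W
  let lengths : Set ℕ :=
    {n | ∃ (l : W) (p : T.Walk l t), p.IsPath ∧ s ∈ p.support ∧ p.length = n}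
  have hne : lengths.Nonempty := by
    obtain ⟨p, hp⟩ := hst.exists_isPath
    exact ⟨_, s, p, hp, p.start_mem_support, rfl⟩
  have hbdd : BddAbove lengths := by
    refine ⟨Fintype.card W, ?_⟩
    rintro _ ⟨l, p, hp, -, rfl⟩
    exact hp.length_lt.le
  obtain ⟨_, ⟨l, p, hp, hsp, rfl⟩, hmax⟩ := hbdd.exists_isGreatest_of_nonempty hne
  refine ⟨l, p, hp, hsp, fun z hz => ?_⟩
  by_contra hzp
  have hlonger : p.length + 1 ∈ lengths :=
    ⟨z, .cons hz.symm p, hp.cons hzp, List.mem_cons_of_mem _ hsp, rfl⟩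
  exact Nat.not_succ_le_self _ (hmax hlonger)

lemma exists_sideLeaf_isPath [Finite W] (hT : T.IsTree) (hty : T.Adj t y)
    (hs : s ∈ edgeSide T t y) :
    ∃ l ∈ sideLeaves T t y, ∃ p : T.Walk l t, p.IsPath ∧ s ∈ p.support := by
  classical
  have hst : t ≠ s := fun h =>
    notMem_edgeSide (isAcyclic_iff_forall_adj_isBridge.1 hT.isAcyclic hty) (h ▸ hs)
  obtain ⟨l, p, hp, hsp, hmax⟩ := exists_isPath_forall_adj_mem_support (hT.connected s t)
  have hnil : ¬ p.Nil := fun hnil => by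
    cases hnil
    exact hst (List.mem_singleton.1 hsp).symm
  have hlside : l ∈ edgeSide T t y :=
    mem_edgeSide_of_notMem_support hs (p.takeUntil s hsp).reverse <| by
      rw [Walk.support_reverse, List.mem_reverse]
      exact Walk.endpoint_notMem_support_takeUntil hp hsp hst
  exact ⟨l, ⟨isLeaf_of_forall_adj_mem_support hT.isAcyclic hp hnil hmax, hlside⟩, p, hp, hsp⟩

lemma min_ncard_sideLeaves_le_mf [Finite W] (hty : T.Adj t y) :
    min (sideLeaves T t y).ncard (sideLeaves T y t).ncard ≤ mf T := by
  have hbdd : BddAbove {k : ℕ | ∃ u v : W, T.Adj u v ∧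
      k = min {w | IsLeaf T w ∧ (T.deleteEdges {s(u, v)}).Reachable u w}.ncard
        {w | IsLeaf T w ∧ (T.deleteEdges {s(u, v)}).Reachable v w}.ncard} := by
    refine ⟨Nat.card W, ?_⟩
    rintro _ ⟨u, v, -, rfl⟩
    exact (min_le_left _ _).trans (Set.ncard_le_card _)
  refine le_csSup hbdd ⟨t, y, hty, ?_⟩
  rw [min_comm, sideLeaves, sideLeaves, edgeSide_swap]
  rfl

end Leaves

namespace TreeRep

variable {V W : Type} {G : SimpleGraph V} {T : SimpleGraph W} (R : TreeRep G T)
  {A : Set V} {P X X' Z' : List V} {a b b' x : V} {s t y : W}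

lemma preconnected (u : V) : (T.induce (R.S u)).Preconnected :=
  (R.subtree_connected u).preconnected

lemma isBridge (R : TreeRep G T) (hty : T.Adj t y) : T.IsBridge s(t, y) :=
  isAcyclic_iff_forall_adj_isBridge.1 R.isTree.isAcyclic hty

lemma adj_of_mem (hab : a ≠ b) (ha : s ∈ R.S a) (hb : s ∈ R.S b) : G.Adj a b :=
  (R.adj_iff a b hab).2 ⟨s, ha, hb⟩

lemma exists_mem_mem_of_adj (hab : G.Adj a b) : ∃ s, s ∈ R.S a ∧ s ∈ R.S b :=
  (R.adj_iff a b hab.ne).1 hab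

lemma notMem_of_subset_edgeSide (hty : T.Adj t y) (ha : R.S a ⊆ edgeSide T t y) : a ∉ R.bag t :=
  fun hta => notMem_edgeSide (R.isBridge hty) (ha hta)

lemma subset_edgeSide_of_adj (hab : G.Adj a b) (ha : R.S a ⊆ edgeSide T t y)
    (hb : b ∉ R.bag t) : R.S b ⊆ edgeSide T t y := by
  obtain ⟨s, hsa, hsb⟩ := R.exists_mem_mem_of_adj hab
  exact subset_edgeSide (R.preconnected b) hb hsb (ha hsa)

lemma subset_edgeSide_of_isChain (hP : P.IsChain G.Adj) (hPt : ∀ x ∈ P, x ∉ R.bag t)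
    (ha : a ∈ P) (hay : R.S a ⊆ edgeSide T t y) : ∀ x ∈ P, R.S x ⊆ edgeSide T t y := by
  by_contra! hb
  obtain ⟨b, hb, hby⟩ := hb
  obtain ⟨x, z, hxz, hx, hz⟩ :=
    exists_areConsecutive (p := fun x => R.S x ⊆ edgeSide T t y) ha hb hay hby
  exact hz (R.subset_edgeSide_of_adj (hxz.adj hP) hx (hPt z hxz.mem.2))

lemma exists_adj_subset_edgeSide (ha : a ∉ R.bag t) :
    ∃ y, T.Adj t y ∧ R.S a ⊆ edgeSide T t y := by
  obtain ⟨s, hs⟩ := (R.subtree_connected a).nonempty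
  obtain ⟨y, hty, hsy⟩ := exists_adj_mem_edgeSide R.isTree.connected.preconnected
    (fun h => ha (h ▸ hs) : s ≠ t)
  exact ⟨y, hty, subset_edgeSide (R.preconnected a) ha hs hsy⟩

lemma mem_bag_of_adj (hty : T.Adj t y) (hab : G.Adj a b) (ha : R.S a ⊆ edgeSide T t y)
    (hb : b ∈ R.bag t) : b ∈ R.bag y := by
  obtain ⟨s, hsa, hsb⟩ := R.exists_mem_mem_of_adj hab
  exact mem_of_mem_edgeSide (S := R.S b) (R.isBridge hty) (R.preconnected b) hb hsb (ha hsa)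

lemma exists_adj_bag_inter_bag_nonempty (hG : G.Preconnected) (hne : G ≠ ⊤)
    (ht : (R.bag t).Nonempty) : ∃ y, T.Adj t y ∧ (R.bag t ∩ R.bag y).Nonempty := by
  obtain ⟨c, hc⟩ : ∃ c, c ∉ R.bag t := by
    by_contra! hall
    refine hne (top_le_iff.1 fun a b hab => ?_)
    exact R.adj_of_mem hab (hall a) (hall b)
  obtain ⟨b, hb⟩ := ht
  obtain ⟨w⟩ := hG b c
  obtain ⟨d, -, hfst, hsnd⟩ := w.exists_boundary_dart _ hb hc
  obtain ⟨y, hty, hy⟩ := R.exists_adj_subset_edgeSide hsnd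
  exact ⟨y, hty, d.fst, hfst, R.mem_bag_of_adj hty d.adj.symm hy hfst⟩

/-- A set `A` of vertices whose subtrees use the edge `ty` and together cover everything that
the subtrees through `t` cover on the side of `y`. Such a set controls how a path of `G`
can leave the bag of `t` towards `y`. -/
structure IsSideCover (t y : W) (A : Set V) : Prop where
  subset : A ⊆ R.bag t ∩ R.bag y
  exists_mem : ∀ ⦃u⦄, u ∈ R.bag t → ∀ ⦃s⦄, s ∈ R.S u → s ∈ edgeSide T t y → ∃ v ∈ A, s ∈ R.S v

lemma exists_isSideCover_ncard_le [Finite W] (hty : T.Adj t y)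
    (hne : (R.bag t ∩ R.bag y).Nonempty) :
    ∃ A : Set V, A.Finite ∧ A.ncard ≤ (sideLeaves T t y).ncard ∧ R.IsSideCover t y A := by
  have hfurthest (l : W) : ∃ v ∈ R.bag t ∩ R.bag y, ∀ p : T.Walk l t, p.IsPath →
      ∀ u ∈ R.bag t ∩ R.bag y, ∀ s ∈ p.support, s ∈ R.S u → s ∈ R.S v := by
    obtain ⟨p, hp, huniq⟩ := R.isTree.existsUnique_path l t
    obtain ⟨v, hv, hmax⟩ := exists_forall_inter_support_subset R.isTree.isAcyclic R.preconnected
      hne (fun u hu => hu.1) hp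
    exact ⟨v, hv, fun q hq => huniq q hq ▸ hmax⟩
  choose rep hrep hmax using hfurthest
  have hfin : (sideLeaves T t y).Finite := Set.toFinite _
  refine ⟨rep '' sideLeaves T t y, hfin.image rep, Set.ncard_image_le hfin, ?_, ?_⟩
  · exact Set.image_subset_iff.2 fun l _ => hrep l
  · intro u hut s hsu hsy
    obtain ⟨l, hl, p, hp, hsp⟩ := exists_sideLeaf_isPath R.isTree hty hsy
    have huy : u ∈ R.bag y :=
      mem_of_mem_edgeSide (S := R.S u) (R.isBridge hty) (R.preconnected u) hut hsu hsy
    exact ⟨rep l, ⟨l, hl, rfl⟩, hmax l p hp u ⟨hut, huy⟩ s hsp hsu⟩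

namespace IsSideCover

variable {R}

lemma exists_mem_adj (hA : R.IsSideCover t y A) (hty : T.Adj t y) (hab : G.Adj a b)
    (ha : R.S a ⊆ edgeSide T t y) (hb : b ∈ R.bag t) :
    ∃ v ∈ A, G.Adj v a ∧ (v ≠ b → G.Adj v b) := by
  obtain ⟨s, hsa, hsb⟩ := R.exists_mem_mem_of_adj hab
  obtain ⟨v, hv, hsv⟩ := hA.exists_mem hb hsb (ha hsa)
  refine ⟨v, hv, R.adj_of_mem ?_ hsv hsa, fun hvb => R.adj_of_mem hvb hsv hsb⟩
  rintro rfl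
  exact R.notMem_of_subset_edgeSide hty ha (hA.subset hv).1

-- Where the path leaves the bag of `t`, a vertex of `A` could be inserted.
lemma not_subset_edgeSide_of_disjoint (hA : R.IsSideCover t y A) (hty : T.Adj t y)
    (hP : IsLongestPathList G P) (hPA : ∀ v ∈ P, v ∉ A) (hb : b ∈ P) (hbt : b ∈ R.bag t)
    (hx : x ∈ P) : ¬ R.S x ⊆ edgeSide T t y := by
  intro hxy
  have hby : ¬ R.S b ⊆ edgeSide T t y := fun h => R.notMem_of_subset_edgeSide hty h hbt
  obtain ⟨a, c, hac, ha, hc⟩ :=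
    exists_areConsecutive (p := fun x => R.S x ⊆ edgeSide T t y) hx hb hxy hby
  have hadj : G.Adj a c := hac.adj hP.isChain
  have hct : c ∈ R.bag t := by
    by_contra hct
    exact hc (R.subset_edgeSide_of_adj hadj ha hct)
  obtain ⟨v, hv, hva, hvc⟩ := hA.exists_mem_adj hty hadj ha hct
  have hvP : v ∉ P := fun h => hPA v h hv
  have hvc : G.Adj v c := hvc fun h => hvP (h ▸ hac.mem.2)
  exact hvP (hP.mem_of_areConsecutive hac hva hvc)

-- If `v ∈ A` is adjacent to `a`, then `X ++ [a] ++ v :: b' :: Z'` is a path.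
lemma length_lt_of_isLongestPathEntering (hA : R.IsSideCover t y A) (hty : T.Adj t y)
    (hP : IsLongestPathEntering G (R.bag t) X' b' Z') (hPA : ∀ v ∈ X' ++ b' :: Z', v ∉ A)
    (hX : IsPathList G (X ++ [a])) (hXy : ∀ x ∈ X ++ [a], R.S x ⊆ edgeSide T t y)
    (hab : G.Adj a b) (hb : b ∈ R.bag t) : (X ++ [a]).length < X'.length := by
  obtain ⟨v, hv, hva, -⟩ := hA.exists_mem_adj hty hab (hXy a (by simp)) hb
  have hvt : v ∈ R.bag t := (hA.subset hv).1
  have hvX : v ∉ X ++ [a] := fun h => R.notMem_of_subset_edgeSide hty (hXy v h) hvt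
  have hvZ : v ∉ b' :: Z' := fun h => hPA v (List.mem_append_right _ h) hv
  have hvb : G.Adj v b' := R.adj_of_mem (fun h => hvZ (h ▸ List.mem_cons_self)) hvt hP.mem
  have hZ : IsPathList G (b' :: Z') := hP.isLongest.of_isInfix (List.suffix_append _ _).isInfix
  have hXZ : (X ++ [a]).Disjoint (b' :: Z') := fun x hx hxZ =>
    hA.not_subset_edgeSide_of_disjoint hty hP.isLongest hPA (by simp) hP.mem
      (List.mem_append_right _ hxZ) (hXy x hx)
  have hlen := hP.isLongest.length_le <|
    (hX.concat hvX hva.symm).glue (hZ.cons hvZ hvb) hXZ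
  simp only [List.length_append, List.length_cons] at hlen ⊢
  omega

lemma isLongestPathTransversal_of_forall_eq_nil (hA : R.IsSideCover t y A) (hne : A.Nonempty)
    (hB : IsLongestPathTransversal G (R.bag t))
    (hnil : ∀ ⦃X b Z⦄, IsLongestPathEntering G (R.bag t) X b Z → X = []) :
    IsLongestPathTransversal G A := by
  intro P hP
  obtain ⟨v, hv⟩ := hne
  obtain ⟨X, b, Z, rfl, hb, hX⟩ := exists_eq_append_cons_of_exists_mem (hB hP)
  obtain rfl : X = [] := hnil ⟨hP, hb, hX⟩
  refine ⟨v, ?_, hv⟩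
  rcases eq_or_ne v b with rfl | hvb
  · exact List.mem_cons_self
  · exact hP.mem_of_adj_head (R.adj_of_mem hvb (hA.subset hv).1 hb)

lemma isLongestPathTransversal_of_forall_length_le (hA : R.IsSideCover t y A)
    (hty : T.Adj t y) (hB : IsLongestPathTransversal G (R.bag t))
    (hX : IsPathList G (X ++ [a])) (hXy : ∀ x ∈ X ++ [a], R.S x ⊆ edgeSide T t y)
    (hab : G.Adj a b) (hb : b ∈ R.bag t)
    (hmax : ∀ ⦃X' b' Z'⦄, IsLongestPathEntering G (R.bag t) X' b' Z' →
      X'.length ≤ (X ++ [a]).length) :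
    IsLongestPathTransversal G A := by
  intro P hP
  by_contra! hPA
  obtain ⟨X', b', Z', rfl, hb', hX'⟩ := exists_eq_append_cons_of_exists_mem (hB hP)
  have hent : IsLongestPathEntering G (R.bag t) X' b' Z' := ⟨hP, hb', hX'⟩
  exact (hA.length_lt_of_isLongestPathEntering hty hent hPA hX hXy hab hb).not_ge (hmax hent)

end IsSideCover

/-- Some longest path transversal within the bag of `y` has at most as many vertices as `T` has
leaves on the side of `y` of the edge `ty`. This is one of the two reasons for which `t` points
at `y`. -/
def HasSideTransversal (t y : W) : Prop :=
  ∃ A : Set V, A.Finite ∧ A.ncard ≤ (sideLeaves T t y).ncard ∧ A ⊆ R.bag y ∧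
    IsLongestPathTransversal G A

/-- Some longest path of `G` has all its subtrees on the side of `y` of the edge `ty`. This is
the other reason for which `t` points at `y`. -/
def HasSideLongestPath (t y : W) : Prop :=
  ∃ P, IsLongestPathList G P ∧ ∀ x ∈ P, R.S x ⊆ edgeSide T t y

variable {R}

lemma IsSideCover.hasSideTransversal (hA : R.IsSideCover t y A) (hfin : A.Finite)
    (hcard : A.ncard ≤ (sideLeaves T t y).ncard) (h : IsLongestPathTransversal G A) :
    R.HasSideTransversal t y :=
  ⟨A, hfin, hcard, fun _ hv => (hA.subset hv).2, h⟩

lemma HasSideTransversal.lpt_le (h : R.HasSideTransversal t y) :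
    lpt G ≤ (sideLeaves T t y).ncard := by
  obtain ⟨A, hfin, hcard, -, hA⟩ := h
  exact (lpt_le_ncard hfin hA).trans hcard

lemma HasSideTransversal.not_hasSideLongestPath (h : R.HasSideTransversal t y)
    (hty : T.Adj t y) : ¬ R.HasSideLongestPath y t := by
  rintro ⟨P, hP, hPt⟩
  obtain ⟨A, -, -, hAy, hA⟩ := h
  obtain ⟨v, hvP, hvA⟩ := hA hP
  exact R.notMem_of_subset_edgeSide hty.symm (hPt v hvP) (hAy hvA)

lemma HasSideLongestPath.not_hasSideLongestPath (hG : G.Connected)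
    (h : R.HasSideLongestPath t y) (hty : T.Adj t y) : ¬ R.HasSideLongestPath y t := by
  rintro ⟨Q, hQ, hQt⟩
  obtain ⟨P, hP, hPy⟩ := h
  refine hP.not_disjoint hG hQ fun v hvP hvQ => ?_
  obtain ⟨s, hs⟩ := (R.subtree_connected v).nonempty
  exact Set.disjoint_left.1 (disjoint_edgeSide_swap (R.isBridge hty)) (hPy v hvP hs) (hQt v hvQ hs)

lemma exists_adj_hasSideTransversal [Finite W] (hG : G.Preconnected) (hne : G ≠ ⊤)
    (hP : IsLongestPathList G P) (hB : IsLongestPathTransversal G (R.bag t)) :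
    ∃ y, T.Adj t y ∧ R.HasSideTransversal t y := by
  obtain ⟨X, b, Z, hX, hmax⟩ := exists_isLongestPathEntering_forall_length_le hP hB
  rcases List.eq_nil_or_concat' X with rfl | ⟨X, a, rfl⟩
  · obtain ⟨y, hty, hbag⟩ := R.exists_adj_bag_inter_bag_nonempty hG hne ⟨b, hX.mem⟩
    obtain ⟨A, hfin, hcard, hA⟩ := R.exists_isSideCover_ncard_le hty hbag
    obtain ⟨u, hut, huy⟩ := hbag
    obtain ⟨v, hv, -⟩ := hA.exists_mem hut huy self_mem_edgeSide
    have hnil ⦃X' b' Z'⦄ (h : IsLongestPathEntering G (R.bag t) X' b' Z') : X' = [] :=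
      List.length_eq_zero_iff.1 (Nat.le_zero.1 (hmax h))
    exact ⟨y, hty, hA.hasSideTransversal hfin hcard <|
      hA.isLongestPathTransversal_of_forall_eq_nil ⟨v, hv⟩ hB hnil⟩
  · have hXa : IsPathList G (X ++ [a]) :=
      hX.isLongest.of_isInfix (List.prefix_append _ _).isInfix
    have hconsec : AreConsecutive (X ++ [a] ++ b :: Z) a b := .inl ⟨X, Z, by simp⟩
    have hab : G.Adj a b := hconsec.adj hX.isLongest.isChain
    obtain ⟨y, hty, hay⟩ := R.exists_adj_subset_edgeSide (hX.notMem a (by simp))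
    have hXy := R.subset_edgeSide_of_isChain hXa.isChain hX.notMem (by simp) hay
    have hby : b ∈ R.bag y := R.mem_bag_of_adj hty hab hay hX.mem
    obtain ⟨A, hfin, hcard, hA⟩ := R.exists_isSideCover_ncard_le hty ⟨b, hX.mem, hby⟩
    exact ⟨y, hty, hA.hasSideTransversal hfin hcard <|
      hA.isLongestPathTransversal_of_forall_length_le hty hB hXa hXy hab hX.mem hmax⟩

lemma exists_adj_hasSideLongestPath [Nonempty V] (hB : ¬ IsLongestPathTransversal G (R.bag t)) :
    ∃ y, T.Adj t y ∧ R.HasSideLongestPath t y := by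
  obtain ⟨P, hP, hPt⟩ : ∃ P, IsLongestPathList G P ∧ ∀ v ∈ P, v ∉ R.bag t := by
    simpa only [IsLongestPathTransversal, not_forall, not_exists, not_and, exists_prop] using hB
  obtain ⟨a, ha⟩ := List.exists_mem_of_ne_nil P hP.ne_nil
  obtain ⟨y, hty, hay⟩ := R.exists_adj_subset_edgeSide (hPt a ha)
  exact ⟨y, hty, P, hP, R.subset_edgeSide_of_isChain hP.isChain hPt ha hay⟩

lemma exists_adj_hasSideTransversal_both [Finite W] (hG : G.Connected)
    (hne : G ≠ ⊤) (hP : IsLongestPathList G P) (R : TreeRep G T) :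
    ∃ t y, T.Adj t y ∧ R.HasSideTransversal t y ∧ R.HasSideTransversal y t := by
  have := hG.nonempty
  have hpoint (t : W) : ∃ y, T.Adj t y ∧ (R.HasSideTransversal t y ∨ R.HasSideLongestPath t y) := by
    by_cases hB : IsLongestPathTransversal G (R.bag t)
    · obtain ⟨y, hty, h⟩ := exists_adj_hasSideTransversal hG.preconnected hne hP hB
      exact ⟨y, hty, .inl h⟩
    · obtain ⟨y, hty, h⟩ := exists_adj_hasSideLongestPath hB
      exact ⟨y, hty, .inr h⟩
  choose target hadj htarget using hpoint
  obtain ⟨t, ht⟩ := exists_apply_apply_eq_of_forall_adj R.isTree hadj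
  have hback := htarget (target t)
  rw [ht] at hback
  refine ⟨t, target t, hadj t, ?_⟩
  rcases htarget t, hback with ⟨htrans | hlong, htrans' | hlong'⟩
  · exact ⟨htrans, htrans'⟩
  · exact absurd hlong' (htrans.not_hasSideLongestPath (hadj t))
  · exact absurd hlong (htrans'.not_hasSideLongestPath (hadj t).symm)
  · exact absurd hlong' (hlong.not_hasSideLongestPath hG (hadj t))

end TreeRep

theorem leafage_bound_general {V W : Type} [Finite W] {G : SimpleGraph V} {T : SimpleGraph W}
    (hconn : G.Connected) (R : TreeRep G T) : G = ⊤ ∨ lpt G ≤ mf T := by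
  refine or_iff_not_imp_left.2 fun hne => ?_
  by_cases hlongest : ∃ P, IsLongestPathList G P
  · obtain ⟨P, hP⟩ := hlongest
    obtain ⟨t, y, hty, ht, hy⟩ := R.exists_adj_hasSideTransversal_both hconn hne hP
    exact (le_min ht.lpt_le hy.lpt_le).trans (min_ncard_sideLeaves_le_mf hty)
  · have hempty : lpt G ≤ (∅ : Set V).ncard :=
      lpt_le_ncard Set.finite_empty fun P hP => absurd ⟨P, hP⟩ hlongest
    exact hempty.trans (by simp)

/-- If `G` is a connected chordal graph with minimal tree representation
`T`, then either `G` is complete, or `lpt(G) ≤ mf(T)`. -/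
theorem leafage_bound {V W : Type} [Fintype V] [Fintype W] (G : SimpleGraph V)
    (T : SimpleGraph W) (hconn : G.Connected) (hchordal : IsChordal G)
    (R : TreeRep G T) (hmin : R.IsMinimal) :
    G = ⊤ ∨ lpt G ≤ mf T :=
  leafage_bound_general hconn R
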